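/- arXiv:2107.08354 — 4 statements merged into one kernel-verified Lean document; each statement's English description precedes it below -/
import Mathlib

section
/- Let H be a complex Hilbert space, let A, B : H → H be self-adjoint continuous linear operators, let c ≥ 0 be a real number, and let s ∈ H. If (A∘B + B∘A)s = 0 and ‖Bs‖ ≥ c‖s‖, then ‖(A + B)s‖ ≥ c‖s‖. -/
/-! Anticommutation at `s` and self-adjointness give
`⟪A s, B s⟫ + ⟪B s, A s⟫ = ⟪s, (A B + B A) s⟫ = 0`, so `Re ⟪A s, B s⟫ = 0`. Hence
`‖(A + B) s‖² = ‖A s‖² + ‖B s‖² ≥ ‖B s‖²`. -/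

theorem norm_add_lower_bound_of_anticommute
    {H : Type*} [NormedAddCommGroup H] [InnerProductSpace ℂ H] [CompleteSpace H]
    (A B : H →L[ℂ] H) (hA : IsSelfAdjoint A) (hB : IsSelfAdjoint B)
    (c : ℝ) (hc : 0 ≤ c) (s : H)
    (hanti : (A.comp B + B.comp A) s = 0)
    (hBs : ‖B s‖ ≥ c * ‖s‖) :
    ‖(A + B) s‖ ≥ c * ‖s‖ := by
  have hAB : inner ℂ (A s) (B s) = inner ℂ s (A (B s)) := hA.isSymmetric s (B s)
  have hBA : inner ℂ (B s) (A s) = inner ℂ s (B (A s)) := hB.isSymmetric s (A s)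
  have hsum : inner ℂ (A s) (B s) + inner ℂ (B s) (A s) = 0 := by
    have h : A (B s) + B (A s) = 0 := hanti
    rw [hAB, hBA, ← inner_add_right, h, inner_zero_right]
  have hre : RCLike.re (inner ℂ (A s) (B s)) = 0 := by
    have h := congrArg RCLike.re hsum
    rw [map_add, inner_re_symm (𝕜 := ℂ) (B s) (A s), map_zero] at h
    linarith
  have hsq : ‖A s + B s‖ ^ 2 = ‖A s‖ ^ 2 + ‖B s‖ ^ 2 := by
    rw [norm_add_sq (𝕜 := ℂ), hre]
    ring
  refine hBs.le.trans ((sq_le_sq₀ (norm_nonneg _) (norm_nonneg _)).mp ?_)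
  rw [add_apply, hsq]
  exact le_add_of_nonneg_left (sq_nonneg _)
end

section
/- Let H be a complex Hilbert space, let A₁, A₂ : H → H be self-adjoint continuous linear operators satisfying A₁∘A₁ + A₂∘A₂ = id, and let T : H → H be any continuous linear operator. Then for every s ∈ H one has ‖T(A₁s)‖ + ‖T(A₂s)‖ ≤ √2 · ‖Ts‖ + ‖(T∘A₁ − A₁∘T)s‖ + ‖(T∘A₂ − A₂∘T)s‖. -/
/-!
Write `T (Aᵢ s) = Aᵢ (T s) + [T, Aᵢ] s` and apply the triangle inequality. For `u = T s`,
self-adjointness turns the partition of unity `A₁² + A₂² = 1` into the Pythagorean identity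
`‖A₁ u‖² + ‖A₂ u‖² = ‖u‖²`, whence `‖A₁ u‖ + ‖A₂ u‖ ≤ √2 ‖u‖` by `(a + b)² ≤ 2 (a² + b²)`.
-/

theorem norm_sq_add_norm_sq_of_partition
    {H : Type*} [NormedAddCommGroup H] [InnerProductSpace ℂ H] [CompleteSpace H]
    (A₁ A₂ : H →L[ℂ] H) (hA₁ : IsSelfAdjoint A₁) (hA₂ : IsSelfAdjoint A₂)
    (hsum : A₁.comp A₁ + A₂.comp A₂ = ContinuousLinearMap.id ℂ H) (u : H) :
    ‖A₁ u‖ ^ 2 + ‖A₂ u‖ ^ 2 = ‖u‖ ^ 2 := by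
  have key : ∀ A : H →L[ℂ] H, IsSelfAdjoint A →
      ‖A u‖ ^ 2 = RCLike.re (inner ℂ (A (A u)) u) := fun A hA => by
    have h := hA.isSymmetric (A u) u
    simp only [ContinuousLinearMap.coe_coe] at h
    rw [h, inner_self_eq_norm_sq]
  have hu : A₁ (A₁ u) + A₂ (A₂ u) = u := by
    simpa using congrArg (fun B : H →L[ℂ] H => B u) hsum
  rw [key A₁ hA₁, key A₂ hA₂, ← map_add, ← inner_add_left, hu, inner_self_eq_norm_sq]

theorem ims_localization_inequality
    {H : Type*} [NormedAddCommGroup H] [InnerProductSpace ℂ H] [CompleteSpace H]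
    (A₁ A₂ : H →L[ℂ] H) (hA₁ : IsSelfAdjoint A₁) (hA₂ : IsSelfAdjoint A₂)
    (hsum : A₁.comp A₁ + A₂.comp A₂ = ContinuousLinearMap.id ℂ H)
    (T : H →L[ℂ] H) :
    ∀ s : H, ‖T (A₁ s)‖ + ‖T (A₂ s)‖ ≤ Real.sqrt 2 * ‖T s‖ +
      ‖(T.comp A₁ - A₁.comp T) s‖ + ‖(T.comp A₂ - A₂.comp T) s‖ := by
  intro s
  have hcomm : ∀ A : H →L[ℂ] H,
      ‖T (A s)‖ ≤ ‖A (T s)‖ + ‖(T.comp A - A.comp T) s‖ := fun A => by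
    simpa using norm_add_le (A (T s)) ((T.comp A - A.comp T) s)
  have hpyth := norm_sq_add_norm_sq_of_partition A₁ A₂ hA₁ hA₂ hsum (T s)
  have hle : ‖A₁ (T s)‖ + ‖A₂ (T s)‖ ≤ Real.sqrt 2 * ‖T s‖ := by
    refine abs_le_of_sq_le_sq' ?_ (by positivity) |>.2
    rw [mul_pow, Real.sq_sqrt (by norm_num), ← hpyth]
    exact add_sq_le
  linarith [hcomm A₁, hcomm A₂]
end

section
/- Let H be a complex Hilbert space, let A₁, A₂ : H → H be self-adjoint continuous linear operators satisfying A₁∘A₁ + A₂∘A₂ = id, let T : H → H be a continuous linear operator, and let c ≥ 0 and ε ≥ 0 be real numbers. Assume that for i = 1, 2 and every s ∈ H one has ‖T(Aᵢs)‖ ≥ c‖Aᵢs‖ and ‖(T∘Aᵢ − Aᵢ∘T)s‖ ≤ ε‖s‖. Then for every s ∈ H one has ‖Ts‖ ≥ ((c − 2ε)/√2) · ‖s‖. -/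
/-! Self-adjointness turns `A₁² + A₂² = 1` into the Pythagorean identity
`‖A₁ x‖² + ‖A₂ x‖² = ‖x‖²` for every `x`. The lower bounds and the commutator bounds give
`‖Aᵢ (T s)‖ ≥ c ‖Aᵢ s‖ - ε ‖s‖`; these are added for `i = 1, 2`. On the left, the identity at
`x = T s` gives `‖A₁ (T s)‖ + ‖A₂ (T s)‖ ≤ √2 ‖T s‖`, and on the right, the identity at `x = s`
gives `‖A₁ s‖ + ‖A₂ s‖ ≥ ‖s‖`.
-/

theorem norm_sq_add_norm_sq_of_sq_add_sq_eq_id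
    {H : Type*} [NormedAddCommGroup H] [InnerProductSpace ℂ H] [CompleteSpace H]
    {A₁ A₂ : H →L[ℂ] H} (hA₁ : IsSelfAdjoint A₁) (hA₂ : IsSelfAdjoint A₂)
    (hsum : A₁.comp A₁ + A₂.comp A₂ = ContinuousLinearMap.id ℂ H) (x : H) :
    ‖A₁ x‖ ^ 2 + ‖A₂ x‖ ^ 2 = ‖x‖ ^ 2 := by
  have h₁ : inner ℂ (A₁ (A₁ x)) x = inner ℂ (A₁ x) (A₁ x) := hA₁.isSymmetric (A₁ x) x
  have h₂ : inner ℂ (A₂ (A₂ x)) x = inner ℂ (A₂ x) (A₂ x) := hA₂.isSymmetric (A₂ x) x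
  have hx : A₁ (A₁ x) + A₂ (A₂ x) = x := by
    simpa using congrArg (fun B : H →L[ℂ] H => B x) hsum
  rw [← inner_self_eq_norm_sq (𝕜 := ℂ) (A₁ x), ← inner_self_eq_norm_sq (𝕜 := ℂ) (A₂ x),
    ← inner_self_eq_norm_sq (𝕜 := ℂ) x, ← h₁, ← h₂, ← map_add, ← inner_add_left, hx]

theorem norm_apply_comm_lower_bound
    {H : Type*} [NormedAddCommGroup H] [InnerProductSpace ℂ H]
    {A T : H →L[ℂ] H} {c ε : ℝ} (s : H) (hlow : ‖T (A s)‖ ≥ c * ‖A s‖)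
    (hcomm : ‖(T.comp A - A.comp T) s‖ ≤ ε * ‖s‖) :
    c * ‖A s‖ - ε * ‖s‖ ≤ ‖A (T s)‖ := by
  have h : ‖T (A s) - A (T s)‖ ≤ ε * ‖s‖ := hcomm
  linarith [norm_sub_norm_le (T (A s)) (A (T s))]


theorem gluing_lower_bound
    {H : Type*} [NormedAddCommGroup H] [InnerProductSpace ℂ H] [CompleteSpace H]
    (A₁ A₂ : H →L[ℂ] H) (hA₁ : IsSelfAdjoint A₁) (hA₂ : IsSelfAdjoint A₂)
    (hsum : A₁.comp A₁ + A₂.comp A₂ = ContinuousLinearMap.id ℂ H)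
    (T : H →L[ℂ] H) (c ε : ℝ) (hc : 0 ≤ c) (hε : 0 ≤ ε)
    (hlow₁ : ∀ s : H, ‖T (A₁ s)‖ ≥ c * ‖A₁ s‖)
    (hlow₂ : ∀ s : H, ‖T (A₂ s)‖ ≥ c * ‖A₂ s‖)
    (hcomm₁ : ∀ s : H, ‖(T.comp A₁ - A₁.comp T) s‖ ≤ ε * ‖s‖)
    (hcomm₂ : ∀ s : H, ‖(T.comp A₂ - A₂.comp T) s‖ ≤ ε * ‖s‖) :
    ∀ s : H, ‖T s‖ ≥ ((c - 2 * ε) / Real.sqrt 2) * ‖s‖ := by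
  intro s
  have hs := norm_sq_add_norm_sq_of_sq_add_sq_eq_id hA₁ hA₂ hsum s
  have hTs := norm_sq_add_norm_sq_of_sq_add_sq_eq_id hA₁ hA₂ hsum (T s)
  have h₁ := norm_apply_comm_lower_bound s (hlow₁ s) (hcomm₁ s)
  have h₂ := norm_apply_comm_lower_bound s (hlow₂ s) (hcomm₂ s)
  have hlower : ‖s‖ ≤ ‖A₁ s‖ + ‖A₂ s‖ := by
    refine le_of_pow_le_pow_left₀ two_ne_zero (by positivity) ?_
    nlinarith [mul_nonneg (norm_nonneg (A₁ s)) (norm_nonneg (A₂ s))]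
  have hupper : ‖A₁ (T s)‖ + ‖A₂ (T s)‖ ≤ Real.sqrt 2 * ‖T s‖ := by
    refine le_of_pow_le_pow_left₀ two_ne_zero (by positivity) ?_
    rw [mul_pow, Real.sq_sqrt (by norm_num)]
    nlinarith [sq_nonneg (‖A₁ (T s)‖ - ‖A₂ (T s)‖)]
  rw [ge_iff_le, div_mul_eq_mul_div, div_le_iff₀ (by positivity)]
  linarith [mul_le_mul_of_nonneg_left hlower hc]
end

section
/- Let G be a group acting on a topological space X such that the action is properly discontinuous (for every pair of compact subsets K, L of X, the set of g ∈ G with (g • K) ∩ L nonempty is finite). Assume G is residually finite, in the form: for every g ∈ G with g ≠ 1 there exists a normal subgroup N of G of finite index with g ∉ N. Then for every compact subset K of X there exists a normal subgroup N of G of finite index such that the quotient map X → N\X is injective on K; that is, for all x, y ∈ K and all n ∈ N, if n • x = y then x = y (and hence n fixes x). -/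
/-! By proper discontinuity only finitely many `g ≠ 1` satisfy `g • K ∩ K ≠ ∅`. For each of them
residual finiteness gives a finite-index normal subgroup avoiding `g`; the intersection `N` of these
finitely many subgroups is again normal of finite index. An `n ∈ N` sending a point of `K` into `K`
must be `1`, since otherwise it would be one of the avoided elements. -/

open Pointwise

theorem residually_finite_injective_on_compact
    {G : Type*} [Group G] {X : Type*} [TopologicalSpace X] [MulAction G X]
    (hproper : ∀ K L : Set X, IsCompact K → IsCompact L →
      Set.Finite {g : G | (g • K) ∩ L ≠ ∅})
    (hresid : ∀ g : G, g ≠ 1 → ∃ N : Subgroup G, N.Normal ∧ N.FiniteIndex ∧ g ∉ N) :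
    ∀ K : Set X, IsCompact K →
      ∃ N : Subgroup G, N.Normal ∧ N.FiniteIndex ∧
        ∀ x ∈ K, ∀ y ∈ K, ∀ n ∈ N, n • x = y → x = y := by
  intro K hK
  choose! N hnormal hindex hnotMem using hresid
  let S : Set G := {g : G | (g • K) ∩ K ≠ ∅} \ {1}
  have hfin : Finite S := (hproper K K hK hK).sdiff.to_subtype
  refine ⟨⨅ g : S, N g, Subgroup.normal_iInf_normal fun g => hnormal g g.2.2,
    Subgroup.finiteIndex_iInf fun g => hindex g g.2.2, ?_⟩
  rintro x hx y hy n hn hxy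
  have hn1 : n = 1 := by
    by_contra hne
    have hmeet : (n • K) ∩ K ≠ ∅ :=
      Set.Nonempty.ne_empty ⟨y, hxy ▸ Set.smul_mem_smul_set hx, hy⟩
    exact hnotMem n hne (Subgroup.mem_iInf.mp hn ⟨n, hmeet, hne⟩)
  rw [← hxy, hn1, one_smul]
end
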